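/- Fix any ρ > 0. For every real damping parameter ω, the supremum over θ ∈ T^H of max{ |1 − ω|, |1 − ω·g_m(θ)|, |1 − ω·σ*(1/g_m(θ), ρ)| } (the spectral radius of the symbol of the mass-Braess–Sarazin relaxation error operator) is at least 1/3, and this supremum equals 1/3 if and only if ω = 3/4. In other words, the optimal LFA smoothing factor for the mass-Braess–Sarazin relaxation is 1/3, uniquely attained at ω = 3/4, independently of the Lamé constants. -/

import Mathlib

open Real Set

/-- The high-frequency set `T^H`. -/
def TH : Set (ℝ × ℝ) :=
  (Ioc (-(π/2)) (3*π/2) ×ˢ Ioc (-(π/2)) (3*π/2)) \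
    (Ioc (-(π/2)) (π/2) ×ˢ Ioc (-(π/2)) (π/2))

/-- Scaled symbol of the five-point discrete Laplacian. -/
noncomputable def chi (θ : ℝ × ℝ) : ℝ := 4 - 2 * Real.cos θ.1 - 2 * Real.cos θ.2

/-- Scaled symbol of the product of the bilinear mass matrix and the discrete Laplacian. -/
noncomputable def gm (θ : ℝ × ℝ) : ℝ :=
  chi θ * (4 + 2 * Real.cos θ.1 + 2 * Real.cos θ.2 + Real.cos θ.1 * Real.cos θ.2) / 9

/-- Third eigenvalue of the preconditioned elasticity symbol, as a function of
`t = η/χ` and `ρ = ε/λ`. -/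
noncomputable def sigmaStar (t ρ : ℝ) : ℝ := (1 + 2*ρ) / (1 + (1 + t)*ρ)

/-!
The number `σ*(1/g, ρ)` is a weighted mean of `1` and `g`, and `a ↦ |1 - ω a|` is convex, so the
third eigenvalue of the symbol never dominates the other two. On `T^H` the symbol `g_m` has least
value `8/9` and greatest value `16/9`, on either side of `1`, so by convexity again the supremum is
`max |1 - ω (8/9)| |1 - ω (16/9)|`. What remains is the optimal damping of a scalar Richardson
iteration with eigenvalues in `[m, M]`: the best factor is `(M - m) / (M + m)`, attained only at
`ω = 2 / (M + m)`.
-/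

section OptimalDamping

variable {K : Type*} [Field K] [LinearOrder K] [IsStrictOrderedRing K] {m M a : K}

lemma abs_one_sub_mul_le_max_of_mem_uIcc (ω : K) (ha : a ∈ uIcc m M) :
    |1 - ω * a| ≤ max |1 - ω * m| |1 - ω * M| := by
  have hωa : ω * a ∈ uIcc (ω * m) (ω * M) :=
    image_const_mul_uIcc ω m M ▸ mem_image_of_mem (ω * ·) ha
  have h : 1 - ω * a ∈ uIcc (1 - ω * m) (1 - ω * M) :=
    image_const_sub_uIcc 1 (ω * m) (ω * M) ▸ mem_image_of_mem (1 - ·) hωa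
  rcases mem_uIcc.1 h with ⟨hl, hu⟩ | ⟨hl, hu⟩
  · exact abs_le_max_abs_abs hl hu
  · exact max_comm |1 - ω * M| _ ▸ abs_le_max_abs_abs hl hu

lemma sub_div_add_le_max_abs_one_sub_mul (hm : 0 ≤ m) (hM : 0 ≤ M) (ω : K) :
    (M - m) / (M + m) ≤ max |1 - ω * m| |1 - ω * M| := by
  set r := max |1 - ω * m| |1 - ω * M|
  have hr : 0 ≤ r := (abs_nonneg _).trans (le_max_left _ _)
  have hmr : 1 - ω * m ≤ r := (le_abs_self _).trans (le_max_left _ _)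
  have hMr : -(1 - ω * M) ≤ r := (neg_le_abs _).trans (le_max_right _ _)
  refine div_le_of_le_mul₀ (add_nonneg hM hm) hr ?_
  calc M - m = M * (1 - ω * m) + m * -(1 - ω * M) := by ring
    _ ≤ M * r + m * r := by gcongr
    _ = r * (M + m) := by ring

lemma max_abs_one_sub_mul_eq_sub_div_add_iff (hm : 0 < m) (hmM : m ≤ M) (ω : K) :
    max |1 - ω * m| |1 - ω * M| = (M - m) / (M + m) ↔ ω = 2 / (M + m) := by
  have hM : 0 < M := hm.trans_le hmM
  have hsum : 0 < M + m := add_pos hM hm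
  have one_sub : 1 - (M - m) / (M + m) = 2 / (M + m) * m := by field_simp; ring
  have one_add : 1 + (M - m) / (M + m) = 2 / (M + m) * M := by field_simp; ring
  constructor
  · intro h
    obtain ⟨hmr, hMr⟩ := max_le_iff.1 h.le
    have lower : 2 / (M + m) * m ≤ ω * m := by linarith [(abs_le.1 hmr).2]
    have upper : ω * M ≤ 2 / (M + m) * M := by linarith [(abs_le.1 hMr).1]
    exact le_antisymm (le_of_mul_le_mul_right upper hM) (le_of_mul_le_mul_right lower hm)
  · rintro rfl
    have hr : 0 ≤ (M - m) / (M + m) := div_nonneg (sub_nonneg.2 hmM) hsum.le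
    rw [← one_sub, ← one_add, sub_sub_cancel, sub_add_cancel_left, abs_neg, max_self,
      abs_of_nonneg hr]

end OptimalDamping

lemma sigmaStar_one_div_mem_uIcc {g ρ : ℝ} (hg : 0 < g) (hρ : 0 ≤ ρ) :
    sigmaStar (1 / g) ρ ∈ uIcc 1 g := by
  rw [← segment_eq_uIcc, mem_segment_iff_div]
  refine ⟨(1 + ρ) * g, ρ, by positivity, hρ, by positivity, ?_⟩
  simp only [sigmaStar, smul_eq_mul]
  field_simp
  ring

lemma cos_nonpos_or_cos_nonpos_of_mem_TH {θ : ℝ × ℝ} (hθ : θ ∈ TH) :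
    cos θ.1 ≤ 0 ∨ cos θ.2 ≤ 0 := by
  obtain ⟨⟨h₁, h₂⟩, hlow⟩ := hθ
  have cos_nonpos {x : ℝ} (hx : x ∈ Ioc (-(π / 2)) (3 * π / 2))
      (hx' : x ∉ Ioc (-(π / 2)) (π / 2)) : cos x ≤ 0 := by
    have hlt : π / 2 < x := not_le.1 fun hle => hx' ⟨hx.1, hle⟩
    exact cos_nonpos_of_pi_div_two_le_of_le hlt.le (by linarith [hx.2])
  rcases not_and_or.1 hlow with h | h
  · exact .inl (cos_nonpos h₁ h)
  · exact .inr (cos_nonpos h₂ h)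

lemma gm_swap (θ : ℝ × ℝ) : gm θ.swap = gm θ := by
  simp only [gm, chi, Prod.fst_swap, Prod.snd_swap]
  ring

lemma gm_le_sixteen_div_nine (θ : ℝ × ℝ) : gm θ ≤ 16 / 9 := by
  have hx : 0 ≤ 1 + cos θ.1 := by linarith [neg_one_le_cos θ.1]
  have hy : 0 ≤ 1 + cos θ.2 := by linarith [neg_one_le_cos θ.2]
  have gap : 16 / 9 - gm θ = 2 / 9 * (cos θ.1 ^ 2 * (1 + cos θ.2) +
      cos θ.2 ^ 2 * (1 + cos θ.1) + (cos θ.1 + cos θ.2) ^ 2) := by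
    simp only [gm, chi]
    ring
  exact sub_nonneg.1 (gap ▸ by positivity)

lemma eight_div_nine_le_gm_of_cos_fst_nonpos {θ : ℝ × ℝ} (h : cos θ.1 ≤ 0) : 8 / 9 ≤ gm θ := by
  have hx : 0 ≤ 1 + cos θ.1 := by linarith [neg_one_le_cos θ.1]
  have hx' : 0 ≤ -cos θ.1 := neg_nonneg.2 h
  have hy : 0 ≤ 1 + cos θ.2 := by linarith [neg_one_le_cos θ.2]
  have hy' : 0 ≤ 1 - cos θ.2 := sub_nonneg.2 (cos_le_one θ.2)
  -- `gm` is a concave quadratic in `y = cos θ.2`: interpolate linearly between `y = ±1` and add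
  -- the remainder, a nonnegative multiple of `(1 - y) * (1 + y)`.
  have gap : gm θ - 8 / 9 = ((1 - cos θ.2) * ((1 + cos θ.1) * (2 + -cos θ.1)) +
      (1 + cos θ.2) * (2 + 3 * (-cos θ.1 * (1 + cos θ.1))) +
      2 * (1 + (1 + cos θ.1)) * ((1 - cos θ.2) * (1 + cos θ.2))) / 9 := by
    simp only [gm, chi]
    ring
  exact sub_nonneg.1 (gap ▸ by positivity)

lemma eight_div_nine_le_gm_of_mem_TH {θ : ℝ × ℝ} (hθ : θ ∈ TH) : 8 / 9 ≤ gm θ := by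
  rcases cos_nonpos_or_cos_nonpos_of_mem_TH hθ with h | h
  · exact eight_div_nine_le_gm_of_cos_fst_nonpos h
  · exact gm_swap θ ▸ eight_div_nine_le_gm_of_cos_fst_nonpos (θ := θ.swap) h

lemma isLeast_image_gm_TH : IsLeast (gm '' TH) (8 / 9) := by
  refine ⟨⟨(π, π), ?_, ?_⟩, forall_mem_image.2 fun _ => eight_div_nine_le_gm_of_mem_TH⟩
  · simp only [TH, mem_sdiff, mem_prod, mem_Ioc]
    grind [pi_pos]
  · norm_num [gm, chi]

lemma isGreatest_image_gm_TH : IsGreatest (gm '' TH) (16 / 9) := by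
  have cos_three_pi_div_two : cos (3 * π / 2) = 0 :=
    cos_eq_zero_iff.2 ⟨1, by norm_num⟩
  -- Both cosines vanish at the maximizer, but `(π / 2, π / 2)` is a low frequency.
  refine ⟨⟨(π / 2, 3 * π / 2), ?_, ?_⟩, forall_mem_image.2 fun θ _ => gm_le_sixteen_div_nine θ⟩
  · simp only [TH, mem_sdiff, mem_prod, mem_Ioc]
    grind [pi_pos]
  · norm_num [gm, chi, cos_three_pi_div_two]

/-- Spectral radius of the symbol of the mass-Braess–Sarazin error operator with damping `ω` at
the frequency `θ`, defined as the largest modulus of the three eigenvalues. -/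
noncomputable def errorSpectralRadius (ρ ω : ℝ) (θ : ℝ × ℝ) : ℝ :=
  max |1 - ω| (max |1 - ω * gm θ| |1 - ω * sigmaStar (1 / gm θ) ρ|)

/-- LFA smoothing factor of the mass-Braess–Sarazin relaxation with damping `ω`: the supremum of
the spectral radius of its error symbol over the high frequencies. The real-valued `sSup` is
meaningful for `0 ≤ ρ`, by `isLUB_image_errorSpectralRadius`. -/
noncomputable def smoothingFactor (ρ ω : ℝ) : ℝ := sSup (errorSpectralRadius ρ ω '' TH)

lemma errorSpectralRadius_eq {ρ : ℝ} (hρ : 0 ≤ ρ) (ω : ℝ) {θ : ℝ × ℝ} (hθ : 0 < gm θ) :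
    errorSpectralRadius ρ ω θ = max |1 - ω| |1 - ω * gm θ| := by
  have h := abs_one_sub_mul_le_max_of_mem_uIcc ω (sigmaStar_one_div_mem_uIcc hθ hρ)
  rw [mul_one] at h
  rw [errorSpectralRadius, ← max_assoc, max_eq_left h]

lemma isLUB_image_errorSpectralRadius {ρ : ℝ} (hρ : 0 ≤ ρ) (ω : ℝ) :
    IsLUB (errorSpectralRadius ρ ω '' TH) (max |1 - ω * (8 / 9)| |1 - ω * (16 / 9)|) := by
  have le_endpoints {a : ℝ} (ha : a ∈ Icc (8 / 9) (16 / 9)) :=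
    abs_one_sub_mul_le_max_of_mem_uIcc ω (Icc_subset_uIcc ha)
  constructor
  · rintro _ ⟨θ, hθ, rfl⟩
    have hg : 8 / 9 ≤ gm θ := eight_div_nine_le_gm_of_mem_TH hθ
    rw [errorSpectralRadius_eq hρ ω (by linarith)]
    refine max_le ?_ (le_endpoints ⟨hg, gm_le_sixteen_div_nine θ⟩)
    simpa only [mul_one] using le_endpoints (a := 1) (by norm_num)
  · intro b hb
    have le_b {g : ℝ} (hg : g ∈ gm '' TH) : |1 - ω * g| ≤ b := by
      obtain ⟨θ, hθ, rfl⟩ := hg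
      exact ((le_max_left _ _).trans (le_max_right _ _)).trans (hb (mem_image_of_mem _ hθ))
    exact max_le (le_b isLeast_image_gm_TH.1) (le_b isGreatest_image_gm_TH.1)

lemma smoothingFactor_eq {ρ : ℝ} (hρ : 0 ≤ ρ) (ω : ℝ) :
    smoothingFactor ρ ω = max |1 - ω * (8 / 9)| |1 - ω * (16 / 9)| :=
  (isLUB_image_errorSpectralRadius hρ ω).csSup_eq
    (isLeast_image_gm_TH.nonempty.of_image.image _)

theorem stmt_13 (ρ : ℝ) (hρ : 0 < ρ) (ω : ℝ) :
    1/3 ≤ sSup ((fun θ =>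
        max |1 - ω| (max |1 - ω * gm θ| |1 - ω * sigmaStar (1 / gm θ) ρ|)) '' TH) ∧
      (sSup ((fun θ =>
        max |1 - ω| (max |1 - ω * gm θ| |1 - ω * sigmaStar (1 / gm θ) ρ|)) '' TH) = 1/3
        ↔ ω = 3/4) := by
  change 1 / 3 ≤ smoothingFactor ρ ω ∧ (smoothingFactor ρ ω = 1 / 3 ↔ ω = 3 / 4)
  have optimal_factor : ((16 / 9 - 8 / 9) / (16 / 9 + 8 / 9) : ℝ) = 1 / 3 := by norm_num
  have optimal_damping : (2 / (16 / 9 + 8 / 9) : ℝ) = 3 / 4 := by norm_num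
  rw [smoothingFactor_eq hρ.le, ← optimal_factor, ← optimal_damping]
  exact ⟨sub_div_add_le_max_abs_one_sub_mul (by norm_num) (by norm_num) ω,
    max_abs_one_sub_mul_eq_sub_div_add_iff (by norm_num) (by norm_num) ω⟩
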